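/- arXiv:2302.06005 — 2 statements merged into one kernel-verified Lean document; each statement's English description precedes it below -/
import Mathlib

section
/- Let (Ω,ρ,μ) be a metric probability space, let β ∈ (0,1], L > 0, and let 0 < ε < min(L, 1/4). Then the bracketing entropy of the weak-average-Hölder class satisfies log N_[](H̃öl^β_L(Ω,μ), L1(μ), ε) ≤ N_Ω((ε/(128·L·log₂(1/ε)))^{1/β}) · log(16·log₂(1/ε)/ε), where N_Ω denotes the covering number of Ω. -/
open MeasureTheory Set Metric
open scoped ENNReal NNReal

noncomputable section

/-- The `β`-hslope of `f` at `x`: `Λ_f^β(x) = sup_{y ≠ x} |f x - f y| / ρ(x,y)^β`. -/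
def hslope {Ω : Type*} [MetricSpace Ω] (β : ℝ) (f : Ω → ℝ) (x : Ω) : ℝ≥0∞ :=
  ⨆ (y : Ω) (_ : y ≠ x), ENNReal.ofReal (|f x - f y| / dist x y ^ β)

/-- The average `β`-hslope of `f` with respect to `μ`: `E_{X∼μ}[Λ_f^β(X)]`. -/
def avgSlope {Ω : Type*} [MetricSpace Ω] [MeasurableSpace Ω] (μ : Measure Ω) (β : ℝ)
    (f : Ω → ℝ) : ℝ≥0∞ :=
  ∫⁻ x, hslope β f x ∂μ

/-- The weak average `β`-hslope of `f` with respect to `μ`: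
`sup_{t>0} t · μ {x : Λ_f^β(x) ≥ t}`. -/
def weakAvgSlope {Ω : Type*} [MetricSpace Ω] [MeasurableSpace Ω] (μ : Measure Ω) (β : ℝ)
    (f : Ω → ℝ) : ℝ≥0∞ :=
  ⨆ (t : ℝ) (_ : 0 < t), ENNReal.ofReal t * μ {x | ENNReal.ofReal t ≤ hslope β f x}

/-- The class `H̄öl^β_L(Ω,μ)` of measurable `[0,1]`-valued functions with average
`β`-hslope at most `L`. -/
def avgHolderClass {Ω : Type*} [MetricSpace Ω] [MeasurableSpace Ω] (μ : Measure Ω)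
    (β L : ℝ) : Set (Ω → ℝ) :=
  {f | Measurable f ∧ (∀ x, f x ∈ Icc (0:ℝ) 1) ∧ avgSlope μ β f ≤ ENNReal.ofReal L}

/-- The class `H̃öl^β_L(Ω,μ)` of measurable `[0,1]`-valued functions with weak average
`β`-hslope at most `L`. -/
def weakHolderClass {Ω : Type*} [MetricSpace Ω] [MeasurableSpace Ω] (μ : Measure Ω)
    (β L : ℝ) : Set (Ω → ℝ) :=
  {f | Measurable f ∧ (∀ x, f x ∈ Icc (0:ℝ) 1) ∧ weakAvgSlope μ β f ≤ ENNReal.ofReal L}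

/-- The covering number `N_Ω(t)`: minimal cardinality of a set of points whose closed
`t`-balls cover `Ω` (`∞` if no finite cover exists). -/
def coveringNumber (Ω : Type*) [MetricSpace Ω] (t : ℝ) : ℝ≥0∞ :=
  ⨅ (A : Finset Ω) (_ : ∀ x : Ω, ∃ a ∈ A, dist x a ≤ t), (A.card : ℝ≥0∞)

/-- `B` is a finite set of `ε`-brackets (with respect to `L1(μ)`) covering `F`. -/
def IsBracketing {Ω : Type*} [MeasurableSpace Ω] (μ : Measure Ω) (F : Set (Ω → ℝ))
    (ε : ℝ) (B : Finset ((Ω → ℝ) × (Ω → ℝ))) : Prop :=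
  (∀ lu ∈ B, (∀ x, lu.1 x ∈ Icc (0:ℝ) 1 ∧ lu.2 x ∈ Icc (0:ℝ) 1) ∧
      ∫⁻ x, ENNReal.ofReal |lu.2 x - lu.1 x| ∂μ ≤ ENNReal.ofReal ε) ∧
    ∀ f ∈ F, ∃ lu ∈ B, ∀ x, lu.1 x ≤ f x ∧ f x ≤ lu.2 x

/-- The bracketing number `N_[](F, L1(μ), ε)`. -/
def bracketingNumber {Ω : Type*} [MetricSpace Ω] [MeasurableSpace Ω] (F : Set (Ω → ℝ))
    (μ : Measure Ω) (ε : ℝ) : ℝ≥0∞ :=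
  ⨅ (B : Finset ((Ω → ℝ) × (Ω → ℝ))) (_ : IsBracketing μ F ε B), (B.card : ℝ≥0∞)

/-- Logarithm of an extended-real cardinality: equals `log N` for finite natural `N`
and `∞` when `N = ∞`. -/
def elog (N : ℝ≥0∞) : ℝ≥0∞ :=
  ⨅ (m : ℕ) (_ : N ≤ (m : ℝ≥0∞)), ENNReal.ofReal (Real.log m)

/-- The `L1` risk `L_D(f) = E_{(X,Y)∼D} |f(X) − Y|`. -/
def risk {Ω : Type*} [MetricSpace Ω] [MeasurableSpace Ω] (D : Measure (Ω × ℝ))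
    (f : Ω → ℝ) : ℝ≥0∞ :=
  ∫⁻ p, ENNReal.ofReal |f p.1 - p.2| ∂D

/-- The empirical `L1` risk `L_S(f) = (1/n) Σ_i |f(X_i) − Y_i|`. -/
def empRisk {Ω : Type*} [MetricSpace Ω] {n : ℕ} (S : Fin n → Ω × ℝ) (f : Ω → ℝ) : ℝ :=
  (n : ℝ)⁻¹ * ∑ i, |f (S i).1 - (S i).2|

/-- `D` is realizable by the class `F`. -/
def Realizable {Ω : Type*} [MetricSpace Ω] [MeasurableSpace Ω] (D : Measure (Ω × ℝ))
    (F : Set (Ω → ℝ)) : Prop :=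
  ∃ f ∈ F, risk D f = 0

/-- The empirical average `β`-hslope of `f` over the sample points `X_1,…,X_n`. -/
def empAvgSlope {Ω : Type*} [MetricSpace Ω] (β : ℝ) {n : ℕ} (X : Fin n → Ω)
    (f : Ω → ℝ) : ℝ :=
  (n : ℝ)⁻¹ * ∑ i, ⨆ (j : Fin n) (_ : X j ≠ X i), |f (X i) - f (X j)| / dist (X i) (X j) ^ β


/-!
Choose a finite `t`-net and let the cells be the sets of points with a common nearest net point. On
each cell a function `f : Ω → [0,1]` is enclosed in an interval `[k/2^j, (k+2)/2^j]` at the largest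
level `j ≤ J` such that `f` oscillates by at most `2^(-j)` there. If `j < J`, then `f` oscillates by
more than `2^(-j-1)` on a set of diameter at most `2t`, so *every* point of the cell has slope at
least `2^(-j-2)/(2t)^β`, and the weak slope bound makes the total mass of the cells of level `j` at
most `2^(j+2) (2t)^β L`. Hence each level `j < J` contributes at most `8 (2t)^β L` to the `L1` width
of the bracket, and the cells of level `J` contribute at most `2/2^J`. There are fewer than
`2^(J+1)` intervals of level at most `J`, and one is chosen per cell. Rounding `log₂(1/ε) + 2` up
to `J` makes the last contribution at most `ε/2`, and `t` is taken so small that the other levels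
add up to at most `ε/2`.
-/

/-- Indices `(j, k)`, with `j ≤ J` and `k < 2^j`, of the overlapping dyadic subintervals
`[k/2^j, (k+2)/2^j] ∩ [0,1]` of the unit interval of level at most `J`. -/
abbrev DyadicIndex (J : ℕ) : Type := Σ j : Fin (J + 1), Fin (2 ^ (j : ℕ))

namespace DyadicIndex

variable {J : ℕ}

/-- The level `j` of the dyadic interval with index `(j, k)`. -/
def level (d : DyadicIndex J) : ℕ := d.1

/-- The left endpoint of the dyadic interval with index `(j, k)`. -/
def left (d : DyadicIndex J) : ℝ := (d.2 : ℝ) / 2 ^ d.level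

/-- The right endpoint of the dyadic interval with index `(j, k)`, truncated at `1`. -/
def right (d : DyadicIndex J) : ℝ := min 1 (((d.2 : ℝ) + 2) / 2 ^ d.level)

lemma level_le (d : DyadicIndex J) : d.level ≤ J := Nat.lt_succ_iff.1 d.1.2

lemma left_nonneg (d : DyadicIndex J) : 0 ≤ d.left := by
  unfold left
  positivity

lemma right_le_one (d : DyadicIndex J) : d.right ≤ 1 := min_le_left _ _

lemma left_le_right (d : DyadicIndex J) : d.left ≤ d.right := by
  have h_index : ((d.2 : ℕ) : ℝ) ≤ 2 ^ d.level := by exact_mod_cast d.2.2.le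
  refine le_min (div_le_one_of_le₀ h_index (by positivity)) ?_
  unfold left
  gcongr
  exact le_add_of_nonneg_right zero_le_two

lemma abs_right_sub_left_le (d : DyadicIndex J) : |d.right - d.left| ≤ 2 / 2 ^ d.level := by
  rw [abs_of_nonneg (sub_nonneg.2 d.left_le_right)]
  calc d.right - d.left ≤ ((d.2 : ℝ) + 2) / 2 ^ d.level - d.left := by
        gcongr
        exact min_le_right _ _
    _ = 2 / 2 ^ d.level := by rw [left, ← sub_div, add_sub_cancel_left]

lemma card_add_one (J : ℕ) : Fintype.card (DyadicIndex J) + 1 = 2 ^ (J + 1) := by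
  have h_sum : Fintype.card (DyadicIndex J) = ∑ j ∈ Finset.range (J + 1), 2 ^ j := by
    simp only [Fintype.card_sigma, Fintype.card_fin, Finset.sum_range]
  rw [h_sum, Nat.geomSum_eq le_rfl, Nat.div_one, Nat.sub_add_cancel Nat.one_le_two_pow]

end DyadicIndex

lemma exists_nat_div_le_le_div {n : ℕ} (hn : n ≠ 0) {x : ℝ} (hx : x ∈ Icc (0 : ℝ) 1) :
    ∃ k < n, (k : ℝ) / n ≤ x ∧ x ≤ ((k : ℝ) + 1) / n := by
  have hn_pos : (0 : ℝ) < n := by exact_mod_cast Nat.pos_of_ne_zero hn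
  simp only [div_le_iff₀ hn_pos, le_div_iff₀ hn_pos]
  rcases hx.2.eq_or_lt with rfl | hx_lt
  · refine ⟨n - 1, Nat.sub_one_lt hn, ?_⟩
    rw [Nat.cast_pred (Nat.pos_of_ne_zero hn)]
    constructor <;> linarith
  · have h_nonneg : 0 ≤ x * n := mul_nonneg hx.1 hn_pos.le
    exact ⟨⌊x * n⌋₊, (Nat.floor_lt h_nonneg).2 (mul_lt_of_lt_one_left hn_pos hx_lt),
      Nat.floor_le h_nonneg, (Nat.lt_floor_add_one _).le⟩

lemma exists_subset_Icc_nat_div {n : ℕ} (hn : n ≠ 0) {S : Set ℝ} (hS : S ⊆ Icc 0 1)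
    (h_diam : diam S ≤ 1 / n) :
    ∃ k < n, S ⊆ Icc ((k : ℝ) / n) (min 1 (((k : ℝ) + 2) / n)) := by
  rcases S.eq_empty_or_nonempty with rfl | ⟨s, hs⟩
  · exact ⟨0, Nat.pos_of_ne_zero hn, empty_subset _⟩
  have h_below : BddBelow S := bddBelow_Icc.mono hS
  have h_above : BddAbove S := bddAbove_Icc.mono hS
  have h_inf : sInf S ∈ Icc (0 : ℝ) 1 :=
    ⟨le_csInf ⟨s, hs⟩ fun y hy => (hS hy).1, (csInf_le h_below hs).trans (hS hs).2⟩
  obtain ⟨k, hk, h_left, h_right⟩ := exists_nat_div_le_le_div hn h_inf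
  refine ⟨k, hk, fun y hy => ⟨h_left.trans (csInf_le h_below hy), le_min (hS hy).2 ?_⟩⟩
  rw [Real.diam_eq (isBounded_Icc 0 1 |>.subset hS)] at h_diam
  calc y ≤ sSup S := le_csSup h_above hy
    _ ≤ sInf S + 1 / n := by linarith
    _ ≤ ((k : ℝ) + 1) / n + 1 / n := by gcongr
    _ = ((k : ℝ) + 2) / n := by ring

lemma exists_greatest_dyadic_scale (J : ℕ) {r : ℝ} (hr : r ≤ 1) :
    ∃ j ≤ J, r ≤ 1 / 2 ^ j ∧ (j < J → 1 / 2 ^ (j + 1) < r) := by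
  classical
  let fits (j : ℕ) : Prop := r ≤ 1 / 2 ^ j
  have h_zero : fits 0 := by simpa only [fits, pow_zero, div_one] using hr
  exact ⟨Nat.findGreatest fits J, Nat.findGreatest_le _, Nat.findGreatest_spec J.zero_le h_zero,
    fun hj => not_le.1 (Nat.findGreatest_is_greatest (Nat.lt_succ_self _) hj)⟩

lemma exists_dyadicIndex_subset_Icc (J : ℕ) {S : Set ℝ} (hS : S ⊆ Icc 0 1) :
    ∃ d : DyadicIndex J, S ⊆ Icc d.left d.right ∧
      (d.level < J → 1 / 2 ^ (d.level + 1) < diam S) := by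
  have h_diam : diam S ≤ 1 := by
    simpa only [Real.diam_Icc zero_le_one, sub_zero] using diam_mono hS (isBounded_Icc 0 1)
  obtain ⟨j, hj, h_le, h_lt⟩ := exists_greatest_dyadic_scale J h_diam
  obtain ⟨k, hk, hSk⟩ := exists_subset_Icc_nat_div (n := 2 ^ j) (by positivity) hS
    (by exact_mod_cast h_le)
  rw [Nat.cast_pow, Nat.cast_ofNat] at hSk
  exact ⟨⟨⟨j, Nat.lt_succ_iff.2 hj⟩, ⟨k, hk⟩⟩, hSk, h_lt⟩

lemma exists_simpleFunc_dist_le {Ω : Type*} [PseudoMetricSpace Ω] [MeasurableSpace Ω]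
    [OpensMeasurableSpace Ω] {A : Finset Ω} {t : ℝ} (hA : ∀ x : Ω, ∃ a ∈ A, dist x a ≤ t) :
    ∃ p : SimpleFunc Ω A, ∀ x, dist x (p x : Ω) ≤ t := by
  rcases isEmpty_or_nonempty Ω with h_empty | ⟨⟨x₀⟩⟩
  · exact ⟨SimpleFunc.ofIsEmpty, isEmptyElim⟩
  obtain ⟨a₀, ha₀, -⟩ := hA x₀
  have : Nonempty A := ⟨⟨a₀, ha₀⟩⟩
  obtain ⟨e, he⟩ := exists_surjective_nat A
  let N : ℕ := Finset.univ.sup (Function.surjInv he)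
  refine ⟨(SimpleFunc.nearestPtInd (fun n => (e n : Ω)) N).map e, fun x => ?_⟩
  obtain ⟨a, ha, hxa⟩ := hA x
  have h_nearest := SimpleFunc.edist_nearestPt_le (fun n => (e n : Ω)) x
    (Finset.le_sup (f := Function.surjInv he) (Finset.mem_univ ⟨a, ha⟩))
  rw [Function.surjInv_eq he, edist_dist, edist_dist, ENNReal.ofReal_le_ofReal_iff dist_nonneg]
    at h_nearest
  rw [dist_comm] at hxa ⊢
  exact h_nearest.trans hxa

lemma lintegral_comp_le_of_level_le {Ω : Type*} [MeasurableSpace Ω] (μ : Measure Ω)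
    (ℓ : SimpleFunc Ω ℕ) (w : ℕ → ℝ≥0∞) {J : ℕ} {C : ℝ≥0∞} (hJ : ∀ x, ℓ x ≤ J)
    (hC : ∀ j < J, w j * μ (ℓ ⁻¹' {j}) ≤ C) :
    ∫⁻ x, w (ℓ x) ∂μ ≤ J * C + w J * μ univ := by
  have h_range : ℓ.range ⊆ Finset.range (J + 1) := fun j hj => by
    obtain ⟨x, rfl⟩ := SimpleFunc.mem_range.1 hj
    exact Finset.mem_range_succ_iff.2 (hJ x)
  calc ∫⁻ x, w (ℓ x) ∂μ = ∑ j ∈ ℓ.range, w j * μ (ℓ ⁻¹' {j}) := by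
        rw [← SimpleFunc.map_lintegral, ← SimpleFunc.lintegral_eq_lintegral]
        rfl
    _ ≤ ∑ j ∈ Finset.range (J + 1), w j * μ (ℓ ⁻¹' {j}) := Finset.sum_le_sum_of_subset h_range
    _ ≤ ∑ _j ∈ Finset.range J, C + w J * μ univ := by
        rw [Finset.sum_range_succ]
        gcongr with j hj
        · exact hC j (Finset.mem_range.1 hj)
        · exact subset_univ _
    _ = J * C + w J * μ univ := by rw [Finset.sum_const, Finset.card_range, nsmul_eq_mul]

lemma exists_lt_abs_sub_of_lt_diam_image {X : Type*} {f : X → ℝ} {r : ℝ} (hr : 0 ≤ r)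
    {S : Set X} (h_diam : 2 * r < diam (f '' S)) (x : X) : ∃ y ∈ S, r < |f x - f y| := by
  contrapose! h_diam
  refine diam_le_of_forall_dist_le (by positivity) ?_
  rintro _ ⟨y, hy, rfl⟩ _ ⟨z, hz, rfl⟩
  calc dist (f y) (f z) ≤ dist (f x) (f y) + dist (f x) (f z) := dist_triangle_left _ _ _
    _ ≤ r + r := add_le_add (h_diam y hy) (h_diam z hz)
    _ = 2 * r := (two_mul r).symm

section Slope

variable {Ω : Type*} [MetricSpace Ω] {β r D : ℝ} {f : Ω → ℝ}

lemma ofReal_div_rpow_le_hslope (hβ : 0 ≤ β) (hr : 0 ≤ r) {x y : Ω} (h_dist : dist x y ≤ D)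
    (hf : r < |f x - f y|) : ENNReal.ofReal (r / D ^ β) ≤ hslope β f x := by
  have hyx : y ≠ x := by
    rintro rfl
    rw [sub_self, abs_zero] at hf
    exact hf.not_ge hr
  have h_pos : 0 < dist x y := dist_pos.2 hyx.symm
  calc ENNReal.ofReal (r / D ^ β) ≤ ENNReal.ofReal (|f x - f y| / dist x y ^ β) := by
        gcongr
    _ ≤ hslope β f x := le_iSup₂_of_le y hyx le_rfl

variable [MeasurableSpace Ω] (μ : Measure Ω)

lemma ofReal_mul_measure_le_weakAvgSlope {t : ℝ} (ht : 0 < t) {E : Set Ω}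
    (hE : ∀ x ∈ E, ENNReal.ofReal t ≤ hslope β f x) :
    ENNReal.ofReal t * μ E ≤ weakAvgSlope μ β f :=
  calc ENNReal.ofReal t * μ E ≤ ENNReal.ofReal t * μ {x | ENNReal.ofReal t ≤ hslope β f x} := by
        gcongr
        exact hE
    _ ≤ weakAvgSlope μ β f :=
        le_iSup₂ (f := fun (s : ℝ) (_ : 0 < s) =>
          ENNReal.ofReal s * μ {x | ENNReal.ofReal s ≤ hslope β f x}) t ht

lemma ofReal_mul_measure_le_of_lt_diam_image_fiber (hβ : 0 ≤ β) (hr : 0 < r) (hD : 0 < D)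
    {ι : Type*} {p : Ω → ι} (hp : ∀ x y, p x = p y → dist x y ≤ D) {E : Set Ω}
    (hE : ∀ x ∈ E, 2 * r < diam (f '' (p ⁻¹' {p x}))) :
    ENNReal.ofReal r * μ E ≤ ENNReal.ofReal (D ^ β) * weakAvgSlope μ β f := by
  have h_slope : ∀ x ∈ E, ENNReal.ofReal (r / D ^ β) ≤ hslope β f x := fun x hx => by
    obtain ⟨y, hy, hxy⟩ := exists_lt_abs_sub_of_lt_diam_image hr.le (hE x hx) x
    exact ofReal_div_rpow_le_hslope hβ hr.le (hp x y hy.symm) hxy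
  calc ENNReal.ofReal r * μ E
      = ENNReal.ofReal (D ^ β) * (ENNReal.ofReal (r / D ^ β) * μ E) := by
        rw [← mul_assoc, ← ENNReal.ofReal_mul (by positivity), mul_div_cancel₀ _ (by positivity)]
    _ ≤ ENNReal.ofReal (D ^ β) * weakAvgSlope μ β f := by
        gcongr
        exact ofReal_mul_measure_le_weakAvgSlope μ (by positivity) h_slope

end Slope

/-- The pair of lower and upper step functions which, on each fibre `p ⁻¹' {a}`, are the endpoints
of the dyadic interval with index `φ a`. -/
def stepBracket {Ω ι : Type*} {J : ℕ} (p : Ω → ι) (φ : ι → DyadicIndex J) :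
    (Ω → ℝ) × (Ω → ℝ) :=
  (fun x => (φ (p x)).left, fun x => (φ (p x)).right)

lemma lintegral_stepBracket_le {Ω : Type*} [MetricSpace Ω] [MeasurableSpace Ω] (μ : Measure Ω)
    {β D : ℝ} (hβ : 0 ≤ β) (hD : 0 < D) {ι : Type*} {p : SimpleFunc Ω ι}
    (hp : ∀ x y, p x = p y → dist x y ≤ D) {J : ℕ} {φ : ι → DyadicIndex J} {f : Ω → ℝ}
    (hφ : ∀ a, (φ a).level < J → 1 / 2 ^ ((φ a).level + 1) < diam (f '' (p ⁻¹' {a}))) :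
    ∫⁻ x, ENNReal.ofReal |(stepBracket p φ).2 x - (stepBracket p φ).1 x| ∂μ ≤
      J * (8 * ENNReal.ofReal (D ^ β) * weakAvgSlope μ β f) +
        ENNReal.ofReal (2 / 2 ^ J) * μ univ := by
  let ℓ : SimpleFunc Ω ℕ := p.map fun a => (φ a).level
  have h_level_mass : ∀ j < J, ENNReal.ofReal (2 / 2 ^ j) * μ (ℓ ⁻¹' {j}) ≤
      8 * ENNReal.ofReal (D ^ β) * weakAvgSlope μ β f := by
    intro j hj
    have h_osc : ∀ x ∈ ℓ ⁻¹' {j}, 2 * (1 / 2 ^ (j + 2) : ℝ) < diam (f '' (p ⁻¹' {p x})) := by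
      rintro x rfl
      calc 2 * (1 / 2 ^ (ℓ x + 2) : ℝ) = 1 / 2 ^ (ℓ x + 1) := by field
        _ < diam (f '' (p ⁻¹' {p x})) := hφ (p x) hj
    have h_width : ENNReal.ofReal (2 / 2 ^ j) = 8 * ENNReal.ofReal (1 / 2 ^ (j + 2)) := by
      rw [← ENNReal.ofReal_ofNat, ← ENNReal.ofReal_mul (by positivity)]
      congr 1
      field
    rw [h_width, mul_assoc, mul_assoc]
    exact mul_le_mul_right
      (ofReal_mul_measure_le_of_lt_diam_image_fiber μ hβ (by positivity) hD hp h_osc) 8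
  calc ∫⁻ x, ENNReal.ofReal |(stepBracket p φ).2 x - (stepBracket p φ).1 x| ∂μ
      ≤ ∫⁻ x, ENNReal.ofReal (2 / 2 ^ ℓ x) ∂μ :=
        lintegral_mono fun x => ENNReal.ofReal_le_ofReal (φ (p x)).abs_right_sub_left_le
    _ ≤ _ := lintegral_comp_le_of_level_le μ ℓ (fun j => ENNReal.ofReal (2 / 2 ^ j))
        (fun x => (φ (p x)).level_le) h_level_mass

lemma exists_stepBracket {Ω : Type*} [MetricSpace Ω] [MeasurableSpace Ω] (μ : Measure Ω)
    {β D : ℝ} (hβ : 0 ≤ β) (hD : 0 < D) {ι : Type*} {p : SimpleFunc Ω ι}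
    (hp : ∀ x y, p x = p y → dist x y ≤ D) (J : ℕ) {f : Ω → ℝ} (hf : ∀ x, f x ∈ Icc (0 : ℝ) 1) :
    ∃ φ : ι → DyadicIndex J,
      (∀ x, (stepBracket p φ).1 x ≤ f x ∧ f x ≤ (stepBracket p φ).2 x) ∧
      ∫⁻ x, ENNReal.ofReal |(stepBracket p φ).2 x - (stepBracket p φ).1 x| ∂μ ≤
        J * (8 * ENNReal.ofReal (D ^ β) * weakAvgSlope μ β f) +
          ENNReal.ofReal (2 / 2 ^ J) * μ univ := by
  choose φ h_mem h_level using fun a =>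
    exists_dyadicIndex_subset_Icc J (image_subset_iff.2 fun x (_ : x ∈ p ⁻¹' {a}) => hf x)
  exact ⟨φ, fun x => h_mem (p x) (mem_image_of_mem f rfl),
    lintegral_stepBracket_le μ hβ hD hp h_level⟩

lemma exists_isBracketing_card_le {Ω : Type*} [MetricSpace Ω] [MeasurableSpace Ω]
    [OpensMeasurableSpace Ω] {μ : Measure Ω} (hμ : μ univ ≤ 1) {β L ε t : ℝ} {J : ℕ}
    (hβ : 0 ≤ β) (hL : 0 ≤ L) (ht : 0 < t) (hJ : J * (8 * (2 * t) ^ β * L) + 2 / 2 ^ J ≤ ε)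
    {F : Set (Ω → ℝ)}
    (hF : ∀ f ∈ F, (∀ x, f x ∈ Icc (0 : ℝ) 1) ∧ weakAvgSlope μ β f ≤ ENNReal.ofReal L)
    {A : Finset Ω} (hA : ∀ x : Ω, ∃ a ∈ A, dist x a ≤ t) :
    ∃ B, IsBracketing μ F ε B ∧ B.card ≤ Fintype.card (DyadicIndex J) ^ A.card := by
  classical
  obtain ⟨p, hp⟩ := exists_simpleFunc_dist_le hA
  have h_fiber : ∀ x y, p x = p y → dist x y ≤ 2 * t := fun x y hxy => by
    have hy : dist y (p x) ≤ t := hxy ▸ hp y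
    linarith [dist_triangle_right x y (p x : Ω), hp x]
  let isNarrow (lu : (Ω → ℝ) × (Ω → ℝ)) : Prop :=
    ∫⁻ x, ENNReal.ofReal |lu.2 x - lu.1 x| ∂μ ≤ ENNReal.ofReal ε
  let B := (Finset.univ.image (stepBracket (J := J) p)).filter isNarrow
  refine ⟨B, ⟨fun lu hlu => ?_, fun f hf => ?_⟩, ?_⟩
  · obtain ⟨h_step, h_narrow⟩ := Finset.mem_filter.1 hlu
    obtain ⟨φ, -, rfl⟩ := Finset.mem_image.1 h_step
    exact ⟨fun x =>
      ⟨⟨(φ (p x)).left_nonneg, (φ (p x)).left_le_right.trans (φ (p x)).right_le_one⟩,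
        (φ (p x)).left_nonneg.trans (φ (p x)).left_le_right, (φ (p x)).right_le_one⟩, h_narrow⟩
  · obtain ⟨hf_mem, hf_slope⟩ := hF f hf
    obtain ⟨φ, h_bracket, h_width⟩ := exists_stepBracket μ hβ (by positivity) h_fiber J hf_mem
    have h_narrow : isNarrow (stepBracket p φ) :=
      calc _ ≤ J * (8 * ENNReal.ofReal ((2 * t) ^ β) * ENNReal.ofReal L) +
              ENNReal.ofReal (2 / 2 ^ J) * 1 := h_width.trans (by gcongr)
        _ = ENNReal.ofReal (J * (8 * (2 * t) ^ β * L) + 2 / 2 ^ J) := by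
            rw [ENNReal.ofReal_add (by positivity) (by positivity),
              ENNReal.ofReal_mul (by positivity), ENNReal.ofReal_mul (by positivity),
              ENNReal.ofReal_mul (by positivity), ENNReal.ofReal_natCast, ENNReal.ofReal_ofNat,
              mul_one]
        _ ≤ ENNReal.ofReal ε := ENNReal.ofReal_le_ofReal hJ
    exact ⟨stepBracket p φ, Finset.mem_filter.2
      ⟨Finset.mem_image_of_mem _ (Finset.mem_univ φ), h_narrow⟩, h_bracket⟩
  · calc B.card ≤ Fintype.card (A → DyadicIndex J) :=
          (Finset.card_filter_le _ _).trans Finset.card_image_le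
      _ = Fintype.card (DyadicIndex J) ^ A.card := by rw [Fintype.card_fun, Fintype.card_coe]

lemma elog_le_of_le_pow {N : ℝ≥0∞} {m n : ℕ} (h : N ≤ (m : ℝ≥0∞) ^ n) :
    elog N ≤ n * ENNReal.ofReal (Real.log m) :=
  calc elog N ≤ ENNReal.ofReal (Real.log (m ^ n : ℕ)) :=
        iInf₂_le (m ^ n) (by exact_mod_cast h)
    _ = n * ENNReal.ofReal (Real.log m) := by
        rw [Nat.cast_pow, Real.log_pow, ENNReal.ofReal_mul n.cast_nonneg, ENNReal.ofReal_natCast]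

lemma le_coveringNumber_mul {Ω : Type*} [MetricSpace Ω] {t : ℝ} {b c : ℝ≥0∞} (hc : c ≠ 0)
    (hc_top : c ≠ ⊤)
    (h : ∀ A : Finset Ω, (∀ x : Ω, ∃ a ∈ A, dist x a ≤ t) → b ≤ A.card * c) :
    b ≤ coveringNumber Ω t * c := by
  simp only [_root_.coveringNumber, ENNReal.iInf_mul_of_ne hc hc_top]
  exact le_iInf₂ h

lemma le_pow_natCeil_logb {b x : ℝ} (hb : 1 < b) (hx : 0 < x) : x ≤ b ^ ⌈Real.logb b x⌉₊ := by
  rw [← Real.rpow_natCast, ← Real.logb_le_iff_le_rpow hb hx]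
  exact Nat.le_ceil _

lemma pow_natCeil_logb_le_mul {b x : ℝ} (hb : 1 < b) (hx : 1 ≤ x) :
    b ^ ⌈Real.logb b x⌉₊ ≤ b * x := by
  have hb_pos : 0 < b := zero_lt_one.trans hb
  have hx_pos : 0 < x := zero_lt_one.trans_le hx
  calc b ^ ⌈Real.logb b x⌉₊ ≤ b ^ (Real.logb b x + 1) := by
        rw [← Real.rpow_natCast]
        exact Real.rpow_le_rpow_of_exponent_le hb.le
          (Nat.ceil_lt_add_one (Real.logb_nonneg hb hx)).le
    _ = b * x := by
        rw [Real.rpow_add_one hb_pos.ne', Real.rpow_logb hb_pos hb.ne' hx_pos, mul_comm]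

/-- The finest level of the dyadic intervals used for `ε`-brackets: intervals of that level have
length at most `ε / 2`. -/
def bracketDepth (ε : ℝ) : ℕ := ⌈Real.logb 2 (1 / ε)⌉₊ + 2

section BracketDepth

variable {ε : ℝ}

lemma one_le_logb_two_one_div (hε : 0 < ε) (hε_half : ε ≤ 1 / 2) :
    1 ≤ Real.logb 2 (1 / ε) := by
  rw [Real.le_logb_iff_rpow_le one_lt_two (by positivity), Real.rpow_one]
  exact (le_one_div two_pos hε).2 hε_half

lemma two_div_two_pow_bracketDepth_le (hε : 0 < ε) : 2 / 2 ^ bracketDepth ε ≤ ε / 2 := by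
  have h_pow := le_pow_natCeil_logb one_lt_two (one_div_pos.2 hε)
  rw [div_le_iff₀ hε] at h_pow
  rw [bracketDepth, pow_add, div_le_iff₀ (by positivity)]
  linarith

lemma bracketDepth_le (hε : 0 < ε) (hε_half : ε ≤ 1 / 2) :
    bracketDepth ε ≤ 4 * Real.logb 2 (1 / ε) := by
  have h_log := one_le_logb_two_one_div hε hε_half
  have h_ceil := Nat.ceil_lt_add_one (zero_le_one.trans h_log)
  rw [bracketDepth, Nat.cast_add, Nat.cast_ofNat]
  linarith

lemma card_dyadicIndex_bracketDepth_le (hε : 0 < ε) (hε_half : ε ≤ 1 / 2) :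
    (Fintype.card (DyadicIndex (bracketDepth ε)) : ℝ) ≤ 16 * Real.logb 2 (1 / ε) / ε := by
  have h_one : 1 ≤ 1 / ε := by
    rw [le_div_iff₀ hε]
    linarith
  calc (Fintype.card (DyadicIndex (bracketDepth ε)) : ℝ) ≤ 2 ^ (bracketDepth ε + 1) := by
        exact_mod_cast Nat.le_of_lt (DyadicIndex.card_add_one _).le
    _ = 8 * 2 ^ ⌈Real.logb 2 (1 / ε)⌉₊ := by rw [bracketDepth]; ring
    _ ≤ 8 * (2 * (1 / ε)) := by
        gcongr
        exact pow_natCeil_logb_le_mul one_lt_two h_one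
    _ = 16 * 1 / ε := by ring
    _ ≤ 16 * Real.logb 2 (1 / ε) / ε := by
        gcongr
        exact one_le_logb_two_one_div hε hε_half

lemma bracketDepth_mul_add_le {β L : ℝ} (hβ : 0 < β) (hβ_le : β ≤ 1) (hL : 0 < L) (hε : 0 < ε)
    (hε_half : ε ≤ 1 / 2) :
    bracketDepth ε *
        (8 * (2 * (ε / (128 * L * Real.logb 2 (1 / ε))) ^ (1 / β)) ^ β * L) +
      2 / 2 ^ bracketDepth ε ≤ ε := by
  have hK : 0 < Real.logb 2 (1 / ε) := zero_lt_one.trans_le (one_le_logb_two_one_div hε hε_half)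
  have h_depth := bracketDepth_le hε hε_half
  set K := Real.logb 2 (1 / ε)
  have h_rpow : (2 * (ε / (128 * L * K)) ^ (1 / β)) ^ β ≤ 2 * (ε / (128 * L * K)) := by
    rw [Real.mul_rpow zero_le_two (by positivity), one_div,
      Real.rpow_inv_rpow (by positivity) hβ.ne']
    gcongr
    exact Real.rpow_le_self_of_one_le one_le_two hβ_le
  calc _ ≤ 4 * K * (8 * (2 * (ε / (128 * L * K))) * L) + ε / 2 :=
        add_le_add (by gcongr) (two_div_two_pow_bracketDepth_le hε)
    _ = ε := by field

end BracketDepth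

theorem bracketing_entropy_weak_holder_general
    {Ω : Type*} [MetricSpace Ω] [MeasurableSpace Ω] [OpensMeasurableSpace Ω]
    {μ : Measure Ω} (hμ : μ univ ≤ 1) {β L ε : ℝ} (hβ0 : 0 < β) (hβ1 : β ≤ 1) (hL : 0 < L)
    (hε0 : 0 < ε) (hε2 : ε ≤ 1 / 2) {F : Set (Ω → ℝ)}
    (hF : ∀ f ∈ F, (∀ x, f x ∈ Icc (0 : ℝ) 1) ∧ weakAvgSlope μ β f ≤ ENNReal.ofReal L) :
    elog (bracketingNumber F μ ε) ≤
      coveringNumber Ω ((ε / (128 * L * Real.logb 2 (1 / ε))) ^ (1 / β)) *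
        ENNReal.ofReal (Real.log (16 * Real.logb 2 (1 / ε) / ε)) := by
  have hK : 1 ≤ Real.logb 2 (1 / ε) := one_le_logb_two_one_div hε0 hε2
  have h_log_pos : 0 < Real.log (16 * Real.logb 2 (1 / ε) / ε) :=
    Real.log_pos ((one_lt_div hε0).2 (by linarith))
  have h_log_card : Real.log (Fintype.card (DyadicIndex (bracketDepth ε))) ≤
      Real.log (16 * Real.logb 2 (1 / ε) / ε) :=
    Real.log_le_log (Nat.cast_pos.2 (Fintype.card_pos_iff.2 ⟨⟨0, 0⟩⟩))
      (card_dyadicIndex_bracketDepth_le hε0 hε2)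
  refine le_coveringNumber_mul (ENNReal.ofReal_pos.2 h_log_pos).ne' ENNReal.ofReal_ne_top
    fun A hA => ?_
  obtain ⟨B, hB, hB_card⟩ := exists_isBracketing_card_le hμ hβ0.le hL.le (by positivity)
    (bracketDepth_mul_add_le hβ0 hβ1 hL hε0 hε2) hF hA
  calc elog (bracketingNumber F μ ε)
      ≤ A.card * ENNReal.ofReal (Real.log (Fintype.card (DyadicIndex (bracketDepth ε)))) :=
        elog_le_of_le_pow ((iInf₂_le B hB).trans (by exact_mod_cast hB_card))
    _ ≤ A.card * ENNReal.ofReal (Real.log (16 * Real.logb 2 (1 / ε) / ε)) := by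
        gcongr

/-- Theorem: bracketing entropy of the weak-average-Hölder class. -/
theorem bracketing_entropy_weak_holder
    {Ω : Type*} [MetricSpace Ω] [MeasurableSpace Ω] [BorelSpace Ω]
    (μ : Measure Ω) [IsProbabilityMeasure μ]
    (β L ε : ℝ) (hβ0 : 0 < β) (hβ1 : β ≤ 1) (hL : 0 < L)
    (hε0 : 0 < ε) (hεL : ε < L) (hε4 : ε < 1 / 4) :
    elog (bracketingNumber (weakHolderClass μ β L) μ ε) ≤
      coveringNumber Ω ((ε / (128 * L * Real.logb 2 (1 / ε))) ^ (1 / β)) *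
        ENNReal.ofReal (Real.log (16 * Real.logb 2 (1 / ε) / ε)) :=
  bracketing_entropy_weak_holder_general prob_le_one hβ0 hβ1 hL hε0 (by linarith) fun _ hf => hf.2

end
end

section
/- There is an absolute constant c > 0 with the following property. Let (Ω,ρ) be a metric space, β ∈ (0,1], L > 0, δ ∈ (0,1), and 0 < ε < min(L, 1/4), and let D be a distribution over Ω×[0,1], with marginal μ over Ω, realizable by H̃öl^β_L(Ω,μ). If n ≥ c·( N_Ω((ε/(256·L·log₂(1/ε)))^{1/β}) + log(1/δ) ) / ε, then with probability at least 1−δ over drawing a sample S ∼ D^n, every f ∈ H̃öl^β_L(Ω,μ) satisfies L_D(f) ≤ 1.01·L_S(f) + ε. The same holds with H̃öl^β_L(Ω,μ) replaced by H̄öl^β_L(Ω,μ). -/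
open MeasureTheory Set Metric
open scoped ENNReal NNReal

noncomputable section

universe u

/-!
Cut `Ω` into `k ≤ N_Ω(r)` measurable cells of diameter at most `2r`, and let `g` be the target. On
each cell, `h = |f - g|` exceeds its infimum by at most the sum of the slopes of `f` and `g`, scaled
by `κ = (2r)^β` and truncated at `1`. A weak bound `L` on the average slope says that the truncated
slope is at least `t` with probability at most `κL/t`; integrating this tail over `[a, 1]` gives a
mean of at most `a + κ L log (1/a)`. With `a = ε/8` this costs at most `ε/2`, and it remains to
compare the mean of the cellwise infimum of `h` with its empirical mean.

The cellwise infimum is a vector in `[0,1]^k`, and the deviation is linear in it, hence largest at a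
vertex: only the `2^k` unions of cells matter. For each of them `exp (-s x) ≤ 1 - s / (1 + s) x` on
`[0,1]` gives a multiplicative Chernoff bound, in which a deviation `ε/2` beyond the factor
`1 + s = 1.01` has probability at most `exp (-s / (1 + s) · nε/2) = exp (-nε/202)`; this is the
constant `202`.

The average slope dominates the weak one by Markov's inequality, so the weak class is the larger.
-/

open ProbabilityTheory

lemma ofReal_one_sub_le_measure_of_ae_imp {Ω : Type*} [MeasurableSpace Ω] {P : Measure Ω}
    [IsProbabilityMeasure P] {E B : Set Ω} {δ : ℝ} (hB : P.real B ≤ δ)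
    (hEB : ∀ᵐ ω ∂P, ω ∉ B → ω ∈ E) : ENNReal.ofReal (1 - δ) ≤ P E := by
  have hcompl : P.real Eᶜ ≤ δ := (ENNReal.toReal_mono (measure_ne_top _ _) <|
    measure_mono_ae <| hEB.mono fun ω h hE => not_imp_comm.1 h hE).trans hB
  have hadd : 1 ≤ P.real E + P.real Eᶜ := by
    simpa using measureReal_union_le (μ := P) E Eᶜ
  rw [ENNReal.ofReal_le_iff_le_toReal (measure_ne_top _ _)]
  exact sub_le_iff_le_add.2 (hadd.trans (add_le_add le_rfl hcompl))

section Chernoff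

variable {Ω : Type*} [MeasurableSpace Ω] {P : Measure Ω} [IsProbabilityMeasure P] {s : ℝ}

lemma exp_neg_mul_le_one_sub {x : ℝ} (hs : 0 ≤ s) (hx : x ∈ Icc (0 : ℝ) 1) :
    Real.exp (-s * x) ≤ 1 - s / (1 + s) * x := by
  have hsx : 0 ≤ s * x := mul_nonneg hs hx.1
  calc Real.exp (-s * x) = (Real.exp (s * x))⁻¹ := by rw [neg_mul, Real.exp_neg]
    _ ≤ (1 + s * x)⁻¹ := by
        gcongr
        linarith [Real.add_one_le_exp (s * x)]
    _ = 1 - s * x / (1 + s * x) := by field_simp; ring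
    _ ≤ 1 - s * x / (1 + s) := by gcongr; exact mul_le_of_le_one_right hs hx.2
    _ = 1 - s / (1 + s) * x := by ring

lemma mgf_neg_le_exp_neg_mul_integral {X : Ω → ℝ} (hX : Measurable X)
    (hX01 : ∀ ω, X ω ∈ Icc (0 : ℝ) 1) (hs : 0 ≤ s) :
    mgf X P (-s) ≤ Real.exp (-(s / (1 + s) * ∫ ω, X ω ∂P)) := by
  have hint : Integrable X P :=
    .of_mem_Icc 0 1 hX.aemeasurable (.of_forall hX01)
  calc mgf X P (-s) ≤ ∫ ω, (1 - s / (1 + s) * X ω) ∂P :=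
        integral_mono_of_nonneg (.of_forall fun _ => (Real.exp_pos _).le)
          ((integrable_const 1).sub (hint.const_mul _))
          (.of_forall fun ω => exp_neg_mul_le_one_sub hs (hX01 ω))
    _ = 1 - s / (1 + s) * ∫ ω, X ω ∂P := by
        rw [integral_sub (integrable_const 1) (hint.const_mul _), integral_const_mul]
        simp
    _ ≤ Real.exp (-(s / (1 + s) * ∫ ω, X ω ∂P)) := Real.one_sub_le_exp_neg _

lemma measureReal_mul_sum_add_le_sum_integral_le {ι : Type*} [Fintype ι] {X : ι → Ω → ℝ}
    (hindep : iIndepFun X P) (hX : ∀ i, Measurable (X i))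
    (hX01 : ∀ i ω, X i ω ∈ Icc (0 : ℝ) 1) (hs : 0 ≤ s) (c : ℝ) :
    P.real {ω | (1 + s) * ∑ i, X i ω + c ≤ ∑ i, ∫ ω, X i ω ∂P} ≤
      Real.exp (-(s / (1 + s) * c)) := by
  set E := ∑ i, ∫ ω, X i ω ∂P
  have hset : {ω | (1 + s) * ∑ i, X i ω + c ≤ E} =
      {ω | (∑ i, X i) ω ≤ (E - c) / (1 + s)} := by
    ext ω
    simp only [mem_ofPred_eq, Finset.sum_apply]
    rw [le_div_iff₀' (by linarith), le_sub_iff_add_le]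
  have hmgf : mgf (∑ i, X i) P (-s) ≤ Real.exp (-(s / (1 + s) * E)) := by
    calc mgf (∑ i, X i) P (-s) = ∏ i, mgf (X i) P (-s) := hindep.mgf_sum hX _
      _ ≤ ∏ i, Real.exp (-(s / (1 + s) * ∫ ω, X i ω ∂P)) :=
          Finset.prod_le_prod (fun _ _ => mgf_nonneg)
            fun i _ => mgf_neg_le_exp_neg_mul_integral (hX i) (hX01 i) hs
      _ = Real.exp (-(s / (1 + s) * E)) := by
          rw [← Real.exp_sum, Finset.sum_neg_distrib, Finset.mul_sum]
  have hint : Integrable (fun ω => Real.exp (-s * (∑ i, X i) ω)) P := by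
    refine .of_mem_Icc 0 1 (by fun_prop) (.of_forall fun ω => ⟨(Real.exp_pos _).le, ?_⟩)
    rw [Real.exp_le_one_iff, neg_mul, neg_nonpos, Finset.sum_apply]
    exact mul_nonneg hs (Finset.sum_nonneg fun i _ => (hX01 i ω).1)
  rw [hset]
  calc P.real {ω | (∑ i, X i) ω ≤ (E - c) / (1 + s)}
      ≤ Real.exp (- -s * ((E - c) / (1 + s))) * mgf (∑ i, X i) P (-s) :=
        measure_le_le_exp_mul_mgf _ (neg_nonpos.2 hs) hint
    _ ≤ Real.exp (- -s * ((E - c) / (1 + s))) * Real.exp (-(s / (1 + s) * E)) := by gcongr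
    _ = Real.exp (-(s / (1 + s) * c)) := by rw [← Real.exp_add]; ring_nf

end Chernoff

section MeanExcess

variable {Ω ι : Type*} [MeasurableSpace Ω] [MeasurableSpace ι] {s : ℝ} {n : ℕ}

/-- The amount by which the mean of `v` under `μ` exceeds `1 + s` times its empirical mean over the
sample `X`; a one-sided relative deviation bound is an upper bound on it. -/
def meanExcess (μ : Measure Ω) (s : ℝ) (X : Fin n → Ω) (v : Ω → ℝ) : ℝ :=
  ∫ x, v x ∂μ - (1 + s) * ((n : ℝ)⁻¹ * ∑ i, v (X i))

lemma meanExcess_map {μ : Measure Ω} {π : Ω → ι} (hπ : Measurable π) {v : ι → ℝ}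
    (hv : Measurable v) (X : Fin n → Ω) :
    meanExcess (μ.map π) s (fun i => π (X i)) v = meanExcess μ s X (fun x => v (π x)) := by
  rw [meanExcess, meanExcess, integral_map hπ.aemeasurable hv.aestronglyMeasurable]

lemma meanExcess_le_add_integral {μ : Measure Ω} (hs : 0 ≤ s) (X : Fin n → Ω) {h v V : Ω → ℝ}
    (hh : Integrable h μ) (hv : Integrable v μ) (hV : Integrable V μ) (hvh : ∀ x, v x ≤ h x)
    (hhV : ∀ x, h x ≤ v x + V x) :
    meanExcess μ s X h ≤ meanExcess μ s X v + ∫ x, V x ∂μ := by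
  have hmean : ∫ x, h x ∂μ ≤ ∫ x, v x ∂μ + ∫ x, V x ∂μ := by
    rw [← integral_add hv hV]
    exact integral_mono hh (hv.add hV) hhV
  have hemp : (1 + s) * ((n : ℝ)⁻¹ * ∑ i, v (X i)) ≤ (1 + s) * ((n : ℝ)⁻¹ * ∑ i, h (X i)) := by
    gcongr
    exact hvh _
  unfold meanExcess
  linarith

lemma measureReal_pi_le_meanExcess_le {μ : Measure Ω} [IsProbabilityMeasure μ] {v : Ω → ℝ}
    (hv : Measurable v) (hv01 : ∀ x, v x ∈ Icc (0 : ℝ) 1) (hs : 0 ≤ s) (η : ℝ) :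
    (Measure.pi fun _ : Fin n => μ).real {X | η ≤ meanExcess μ s X v} ≤
      Real.exp (-(s / (1 + s) * (n * η))) := by
  set P := Measure.pi fun _ : Fin n => μ
  have hindep : iIndepFun (fun (i : Fin n) X => v (X i)) P := iIndepFun_pi fun _ => hv.aemeasurable
  have hmean (i : Fin n) : ∫ X, v (X i) ∂P = ∫ x, v x ∂μ :=
    integral_comp_eval (μ := fun _ : Fin n => μ) hv.aestronglyMeasurable
  refine (measureReal_mono fun X hX => ?_).trans
    (measureReal_mul_sum_add_le_sum_integral_le hindep (fun i => by fun_prop)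
      (fun _ _ => hv01 _) hs (n * η))
  have hsum : (n : ℝ) * ((n : ℝ)⁻¹ * ∑ i, v (X i)) = ∑ i, v (X i) := by
    rcases eq_or_ne n 0 with rfl | hn
    · simp
    · field_simp
  have hη : (n : ℝ) * η ≤ n * meanExcess μ s X v := by gcongr; exact hX
  simp only [mem_ofPred_eq, hmean, Finset.sum_const, Finset.card_univ, Fintype.card_fin,
    nsmul_eq_mul]
  rw [meanExcess, mul_sub, mul_left_comm, hsum] at hη
  linarith

lemma measureReal_pi_preimage_le_pi_map {κ : Type*} [Fintype κ] {μ : Measure Ω}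
    [IsProbabilityMeasure μ] {φ : Ω → ι} (hφ : Measurable φ) (B : Set (κ → ι)) :
    (Measure.pi fun _ : κ => μ).real {X | (fun i => φ (X i)) ∈ B} ≤
      (Measure.pi fun _ : κ => μ.map φ).real B := by
  have := Measure.isProbabilityMeasure_map (μ := μ) hφ.aemeasurable
  have hpi := measurePreserving_pi (fun _ : κ => μ) (fun _ => μ.map φ)
    fun _ => hφ.measurePreserving μ
  exact ENNReal.toReal_mono (measure_ne_top _ _) (hpi.measure_preimage_le B)

end MeanExcess

section FiniteSpace

variable {ι : Type*}

lemma exists_apply_le_apply_indicator [Finite ι] (Φ : (ι → ℝ) →ₗ[ℝ] ℝ) {w : ι → ℝ}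
    (hw : ∀ j, w j ∈ Icc (0 : ℝ) 1) : ∃ A : Set ι, Φ w ≤ Φ (A.indicator 1) := by
  classical
  have := Fintype.ofFinite ι
  set e : ι → ι → ℝ := fun i j => if i = j then 1 else 0
  have hexpand (v : ι → ℝ) : Φ v = ∑ i, v i * Φ (e i) := Φ.pi_apply_eq_sum_univ v
  refine ⟨{i | 0 < Φ (e i)}, ?_⟩
  rw [hexpand w, hexpand (indicator _ 1)]
  refine Finset.sum_le_sum fun i _ => ?_
  by_cases hi : 0 < Φ (e i)
  · simpa [hi] using mul_le_of_le_one_left hi.le (hw i).2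
  · simpa [hi] using mul_nonpos_of_nonneg_of_nonpos (hw i).1 (not_lt.1 hi)

variable [MeasurableSpace ι] [MeasurableSingletonClass ι] {s : ℝ} {n : ℕ}

lemma exists_meanExcess_le_meanExcess_indicator [Finite ι] (ν : Measure ι) [IsFiniteMeasure ν]
    (T : Fin n → ι) {w : ι → ℝ} (hw : ∀ j, w j ∈ Icc (0 : ℝ) 1) :
    ∃ A : Set ι, meanExcess ν s T w ≤ meanExcess ν s T (A.indicator 1) :=
  exists_apply_le_apply_indicator
    { toFun := meanExcess ν s T
      map_add' v v' := by
        simp only [meanExcess, Pi.add_apply, Finset.sum_add_distrib]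
        rw [integral_add .of_finite .of_finite]
        ring
      map_smul' c v := by
        simp only [meanExcess, Pi.smul_apply, smul_eq_mul, ← Finset.mul_sum, integral_const_mul,
          RingHom.id_apply]
        ring } hw

lemma measureReal_pi_exists_lt_meanExcess_le [Fintype ι] (ν : Measure ι)
    [IsProbabilityMeasure ν] (hs : 0 ≤ s) (η : ℝ) :
    (Measure.pi fun _ : Fin n => ν).real
        {T | ∃ w : ι → ℝ, (∀ j, w j ∈ Icc (0 : ℝ) 1) ∧ η < meanExcess ν s T w} ≤
      2 ^ Fintype.card ι * Real.exp (-(s / (1 + s) * (n * η))) := by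
  classical
  set P := Measure.pi fun _ : Fin n => ν
  calc P.real {T | ∃ w : ι → ℝ, (∀ j, w j ∈ Icc (0 : ℝ) 1) ∧ η < meanExcess ν s T w}
      ≤ P.real (⋃ A : Set ι, {T | η ≤ meanExcess ν s T (A.indicator 1)}) := by
        refine measureReal_mono ?_
        rintro T ⟨w, hw, hη⟩
        obtain ⟨A, hA⟩ := exists_meanExcess_le_meanExcess_indicator ν T hw
        exact mem_iUnion.2 ⟨A, hη.le.trans hA⟩
    _ ≤ ∑ A : Set ι, P.real {T | η ≤ meanExcess ν s T (A.indicator 1)} :=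
        measureReal_iUnion_fintype_le _
    _ ≤ ∑ _A : Set ι, Real.exp (-(s / (1 + s) * (n * η))) := by
        refine Finset.sum_le_sum fun A _ => ?_
        refine measureReal_pi_le_meanExcess_le (measurable_of_finite _) (fun j => ?_) hs η
        exact ⟨indicator_nonneg (fun _ _ => zero_le_one) j,
          indicator_le_self' (fun _ _ => zero_le_one) j⟩
    _ = 2 ^ Fintype.card ι * Real.exp (-(s / (1 + s) * (n * η))) := by simp

end FiniteSpace

section Slope

variable {Ω : Type*} [MetricSpace Ω] {β : ℝ} {f : Ω → ℝ}

lemma coe_lt_hslope_iff {a : ℝ≥0} {x : Ω} :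
    (a : ℝ≥0∞) < hslope β f x ↔ ∃ y, a * dist x y ^ β < |f x - f y| := by
  simp only [hslope, lt_iSup_iff]
  refine exists_congr fun y => ?_
  rcases eq_or_ne y x with rfl | hyx
  · have : 0 ≤ a * dist y y ^ β := by positivity
    simpa using this
  · have hd : 0 < dist x y ^ β := Real.rpow_pos_of_pos (dist_pos.2 hyx.symm) _
    rw [← ENNReal.ofReal_coe_nnreal, ENNReal.ofReal_lt_ofReal_iff_of_nonneg a.coe_nonneg,
      lt_div_iff₀ hd]
    simp [hyx]

lemma ofReal_abs_sub_le_rpow_mul_hslope (x y : Ω) :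
    ENNReal.ofReal |f x - f y| ≤ ENNReal.ofReal (dist x y ^ β) * hslope β f x := by
  rcases eq_or_ne y x with rfl | hyx
  · simp
  have hd : 0 < dist x y ^ β := Real.rpow_pos_of_pos (dist_pos.2 hyx.symm) _
  calc ENNReal.ofReal |f x - f y|
      = ENNReal.ofReal (dist x y ^ β) * ENNReal.ofReal (|f x - f y| / dist x y ^ β) := by
        rw [← ENNReal.ofReal_mul hd.le, mul_div_cancel₀ _ hd.ne']
    _ ≤ ENNReal.ofReal (dist x y ^ β) * hslope β f x := by
        gcongr
        exact le_iSup₂ (f := fun y (_ : y ≠ x) => ENNReal.ofReal (|f x - f y| / dist x y ^ β)) y hyx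

variable [MeasurableSpace Ω]

lemma measurableSet_exists_mul_rpow_lt_sub [OpensMeasurableSpace Ω] (hβ : 0 ≤ β)
    (hf : Measurable f) (a : ℝ) : MeasurableSet {x | ∃ y, a * dist x y ^ β < f y - f x} := by
  have hlsc : LowerSemicontinuous fun x => ⨆ y, ((f y - a * dist x y ^ β : ℝ) : EReal) :=
    lowerSemicontinuous_iSup fun y => by
      refine (continuous_coe_real_ereal.comp ?_).lowerSemicontinuous
      have : Continuous fun x => dist x y ^ β :=
        (continuous_id.dist continuous_const).rpow_const fun _ => .inr hβ
      fun_prop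
  convert measurableSet_lt hf.coe_real_ereal hlsc.measurable using 1
  ext x
  simp only [mem_ofPred_eq, lt_iSup_iff, EReal.coe_lt_coe_iff]
  exact exists_congr fun y => lt_sub_comm

lemma measurable_hslope [OpensMeasurableSpace Ω] (hβ : 0 ≤ β) (hf : Measurable f) :
    Measurable (hslope β f) := by
  refine measurable_of_Ioi fun a => ?_
  rcases eq_or_ne a ⊤ with rfl | ha
  · simp
  lift a to ℝ≥0 using ha
  convert (measurableSet_exists_mul_rpow_lt_sub hβ hf a).union
    (measurableSet_exists_mul_rpow_lt_sub hβ hf.neg a) using 1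
  ext x
  simp only [mem_preimage, mem_Ioi, coe_lt_hslope_iff, lt_abs, mem_union, mem_ofPred_eq,
    exists_or, Pi.neg_apply, neg_sub_neg, neg_sub, or_comm]

lemma avgHolderClass_subset_weakHolderClass [OpensMeasurableSpace Ω] {μ : Measure Ω} {L : ℝ}
    (hβ : 0 ≤ β) : avgHolderClass μ β L ⊆ weakHolderClass μ β L :=
  fun _ ⟨hf, hf01, hL⟩ => ⟨hf, hf01, iSup₂_le fun _ _ =>
    (mul_meas_ge_le_lintegral (measurable_hslope hβ hf) _).trans hL⟩

lemma mul_measureReal_le_of_mem_weakHolderClass {μ : Measure Ω} {L : ℝ}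
    (hL : 0 ≤ L) (hf : f ∈ weakHolderClass μ β L) {t : ℝ} (ht : 0 < t) :
    t * μ.real {x | ENNReal.ofReal t ≤ hslope β f x} ≤ L := by
  have hweak : ENNReal.ofReal t * μ {x | ENNReal.ofReal t ≤ hslope β f x} ≤ ENNReal.ofReal L :=
    (le_iSup₂ (f := fun (t : ℝ) (_ : 0 < t) =>
      ENNReal.ofReal t * μ {x | ENNReal.ofReal t ≤ hslope β f x}) t ht).trans hf.2.2
  simpa [measureReal_def, ht.le, hL] using ENNReal.toReal_mono ENNReal.ofReal_ne_top hweak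

end Slope

section TruncatedSlope

lemma integral_le_add_mul_log_of_mul_measureReal_le {Ω : Type*} [MeasurableSpace Ω]
    {μ : Measure Ω} [IsFiniteMeasure μ] {h : Ω → ℝ} {a M : ℝ} (hh : Measurable h)
    (hh01 : ∀ x, h x ∈ Icc (0 : ℝ) 1) (ha : 0 < a) (ha1 : a ≤ 1)
    (hM : ∀ t ∈ Icc a 1, t * μ.real {x | t ≤ h x} ≤ M) :
    ∫ x, h x ∂μ ≤ a * μ.real univ + M * Real.log (1 / a) := by
  set tail : ℝ → ℝ := fun t => μ.real {x | t ≤ h x}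
  have htail : Antitone tail := fun t t' htt' => measureReal_mono fun x hx => htt'.trans hx
  have hint (b c : ℝ) : IntervalIntegrable tail volume b c := htail.intervalIntegrable
  have hinv : IntervalIntegrable (fun t : ℝ => M * t⁻¹) volume a 1 :=
    (intervalIntegrable_inv_iff.2
      (.inr (notMem_uIcc_of_lt ha one_pos))).const_mul M
  calc ∫ x, h x ∂μ = ∫ t in (0 : ℝ)..1, tail t := by
        rw [(Integrable.of_mem_Icc 0 1 hh.aemeasurable
            (.of_forall hh01)).integral_eq_integral_Ioc_meas_le
          (.of_forall fun x => (hh01 x).1) (.of_forall fun x => (hh01 x).2),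
          intervalIntegral.integral_of_le zero_le_one]
    _ = (∫ t in (0 : ℝ)..a, tail t) + ∫ t in a..1, tail t :=
        (intervalIntegral.integral_add_adjacent_intervals (hint _ _) (hint _ _)).symm
    _ ≤ (∫ _t in (0 : ℝ)..a, μ.real univ) + ∫ t in a..1, M * t⁻¹ := by
        gcongr
        · exact intervalIntegral.integral_mono_on ha.le (hint _ _) intervalIntegrable_const
            fun t _ => measureReal_mono (subset_univ _)
        · refine intervalIntegral.integral_mono_on ha1 (hint _ _) hinv fun t ht => ?_
          rw [← div_eq_mul_inv, le_div_iff₀' (ha.trans_le ht.1)]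
          exact hM t ht
    _ = a * μ.real univ + M * Real.log (1 / a) := by
        simp [integral_inv_of_pos ha one_pos]

variable {Ω : Type*} [MetricSpace Ω] {β κ : ℝ} {f : Ω → ℝ}

/-- The truncation `min (κ · Λ_f^β(x)) 1`. It dominates the oscillation of a `[0,1]`-valued `f`
between `x` and the points `y` with `ρ(x,y)^β ≤ κ`, and it is integrable even where `Λ_f^β` is
only weakly integrable. -/
def truncSlope (β κ : ℝ) (f : Ω → ℝ) (x : Ω) : ℝ :=
  (min (ENNReal.ofReal κ * hslope β f x) 1).toReal

lemma ofReal_truncSlope (x : Ω) :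
    ENNReal.ofReal (truncSlope β κ f x) = min (ENNReal.ofReal κ * hslope β f x) 1 :=
  ENNReal.ofReal_toReal (min_lt_of_right_lt ENNReal.one_lt_top).ne

lemma truncSlope_mem_Icc (x : Ω) : truncSlope β κ f x ∈ Icc (0 : ℝ) 1 :=
  ⟨ENNReal.toReal_nonneg, ENNReal.toReal_le_of_le_ofReal zero_le_one (by simp)⟩

lemma abs_sub_le_truncSlope (hf01 : ∀ x, f x ∈ Icc (0 : ℝ) 1) {x y : Ω}
    (hxy : dist x y ^ β ≤ κ) : |f x - f y| ≤ truncSlope β κ f x := by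
  rw [← ENNReal.ofReal_le_ofReal_iff (truncSlope_mem_Icc x).1, ofReal_truncSlope]
  refine le_min ?_ ?_
  · refine (ofReal_abs_sub_le_rpow_mul_hslope (β := β) x y).trans ?_
    gcongr
  · rw [ENNReal.ofReal_le_one]
    simpa using abs_sub_le_of_le_of_le (hf01 x).1 (hf01 x).2 (hf01 y).1 (hf01 y).2

variable [MeasurableSpace Ω] [OpensMeasurableSpace Ω]

lemma measurable_truncSlope (hβ : 0 ≤ β) (hf : Measurable f) : Measurable (truncSlope β κ f) :=
  (((measurable_hslope hβ hf).const_mul _).min measurable_const).ennreal_toReal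

lemma integrable_truncSlope {μ : Measure Ω} [IsFiniteMeasure μ] (hβ : 0 ≤ β) (hf : Measurable f) :
    Integrable (truncSlope β κ f) μ :=
  .of_mem_Icc 0 1 (measurable_truncSlope hβ hf).aemeasurable (.of_forall truncSlope_mem_Icc)

lemma integral_truncSlope_le {μ : Measure Ω} [IsProbabilityMeasure μ] {L a : ℝ} (hβ : 0 ≤ β)
    (hκ : 0 < κ) (hL : 0 ≤ L) (ha : 0 < a) (ha1 : a ≤ 1) (hf : f ∈ weakHolderClass μ β L) :
    ∫ x, truncSlope β κ f x ∂μ ≤ a + κ * L * Real.log (1 / a) := by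
  have htail (t : ℝ) (ht : t ∈ Icc a 1) :
      t * μ.real {x | t ≤ truncSlope β κ f x} ≤ κ * L := by
    have ht0 : 0 < t := ha.trans_le ht.1
    have hsubset : {x | t ≤ truncSlope β κ f x} ⊆ {x | ENNReal.ofReal (t / κ) ≤ hslope β f x} := by
      intro x hx
      have hx' := (ENNReal.ofReal_le_ofReal hx).trans
        ((ofReal_truncSlope x).trans_le (min_le_left _ _))
      rw [mem_ofPred_eq, ENNReal.ofReal_div_of_pos hκ]
      exact ENNReal.div_le_of_le_mul' hx'
    calc t * μ.real {x | t ≤ truncSlope β κ f x}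
        ≤ t * μ.real {x | ENNReal.ofReal (t / κ) ≤ hslope β f x} := by
          gcongr
          exact measure_ne_top _ _
      _ = κ * (t / κ * μ.real {x | ENNReal.ofReal (t / κ) ≤ hslope β f x}) := by field_simp
      _ ≤ κ * L := by
          gcongr
          exact mul_measureReal_le_of_mem_weakHolderClass hL hf (by positivity)
  simpa using integral_le_add_mul_log_of_mul_measureReal_le (measurable_truncSlope hβ hf.1)
    truncSlope_mem_Icc ha ha1 htail

end TruncatedSlope

section Cells

lemma exists_measurable_fin_of_coveringNumber_le {Ω : Type*} [MetricSpace Ω] [MeasurableSpace Ω]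
    [OpensMeasurableSpace Ω] {r : ℝ} {m : ℕ} (hm : coveringNumber Ω r ≤ m) :
    ∃ k ≤ m, ∃ π : Ω → Fin k, Measurable π ∧ ∀ x y, π x = π y → dist x y ≤ 2 * r := by
  classical
  have hlt : _root_.coveringNumber Ω r < (m + 1 : ℕ) := hm.trans_lt (mod_cast m.lt_succ_self)
  simp only [_root_.coveringNumber, iInf_lt_iff, Nat.cast_lt] at hlt
  obtain ⟨A, hA, hAm⟩ := hlt
  have hcover (x : Ω) : ∃ j, ∃ hj : j < A.card, dist x (A.equivFin.symm ⟨j, hj⟩ : Ω) ≤ r := by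
    obtain ⟨a, ha, hxa⟩ := hA x
    exact ⟨A.equivFin ⟨a, ha⟩, (A.equivFin ⟨a, ha⟩).2, by simpa using hxa⟩
  choose hlt hdist using fun x => Nat.find_spec (hcover x)
  refine ⟨A.card, Nat.lt_succ_iff.1 hAm, fun x => ⟨Nat.find (hcover x), hlt x⟩, ?_, ?_⟩
  · have hfind : Measurable fun x => Nat.find (hcover x) := by
      refine measurable_find hcover fun j => ?_
      by_cases hj : j < A.card
      · simp only [hj, exists_true_left]
        exact measurableSet_le (by fun_prop) measurable_const
      · simp [hj]
    refine measurable_to_countable' fun j => ?_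
    convert hfind (measurableSet_singleton (j : ℕ)) using 1
    ext x
    simp [Fin.ext_iff]
  · intro x y hxy
    have hx := hdist x
    rw [show (⟨_, hlt x⟩ : Fin _) = ⟨_, hlt y⟩ from hxy] at hx
    exact (dist_triangle_right x y _).trans (by linarith [hdist y])

lemma exists_comp_le_and_le_comp_add {Ω ι : Type*} (π : Ω → ι) {h V : Ω → ℝ}
    (hh : ∀ x, h x ∈ Icc (0 : ℝ) 1) (hV : ∀ x y, π x = π y → h x ≤ h y + V x) :
    ∃ w : ι → ℝ, (∀ j, w j ∈ Icc (0 : ℝ) 1) ∧ ∀ x, w (π x) ≤ h x ∧ h x ≤ w (π x) + V x := by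
  set w : ι → ℝ := fun j => ⨅ x : {x // π x = j}, h x
  have hwh (x : Ω) : w (π x) ≤ h x :=
    ciInf_le (f := fun y : {y // π y = π x} => h y)
      ⟨0, forall_mem_range.2 fun y => (hh y).1⟩ ⟨x, rfl⟩
  refine ⟨w, fun j => ⟨Real.iInf_nonneg fun x => (hh x).1, ?_⟩, fun x => ⟨hwh x, ?_⟩⟩
  · rcases isEmpty_or_nonempty {x // π x = j} with _ | ⟨⟨x, rfl⟩⟩
    · simp [w, Real.iInf_of_isEmpty]
    · exact (hwh x).trans (hh x).2
  · have : Nonempty {y // π y = π x} := ⟨⟨x, rfl⟩⟩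
    have hle : h x - V x ≤ w (π x) := le_ciInf fun y => by linarith [hV x y y.2.symm]
    linarith

end Cells

section UniformConvergence

lemma abs_sub_le_abs_sub_add_add (a b c d : ℝ) : |a - b| ≤ |c - d| + (|a - c| + |b - d|) := by
  have habcd := dist_triangle4 a c d b
  simp only [Real.dist_eq] at habcd
  rw [abs_sub_comm b]
  linarith

variable {Ω : Type*} [MetricSpace Ω] [MeasurableSpace Ω] [OpensMeasurableSpace Ω] {β L : ℝ}

lemma exists_meanExcess_abs_sub_le {ι : Type*} [Finite ι] [MeasurableSpace ι]
    [MeasurableSingletonClass ι] {μ : Measure Ω} [IsProbabilityMeasure μ] {κ a s : ℝ}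
    (hβ : 0 ≤ β) (hκ : 0 < κ) (hL : 0 ≤ L) (ha : 0 < a) (ha1 : a ≤ 1) (hs : 0 ≤ s)
    {π : Ω → ι} (hπ : Measurable π) (hπκ : ∀ x y, π x = π y → dist x y ^ β ≤ κ) {f g : Ω → ℝ}
    (hf : f ∈ weakHolderClass μ β L) (hg : g ∈ weakHolderClass μ β L) {n : ℕ} (X : Fin n → Ω) :
    ∃ w : ι → ℝ, (∀ j, w j ∈ Icc (0 : ℝ) 1) ∧
      meanExcess μ s X (fun x => |f x - g x|) ≤
        meanExcess (μ.map π) s (fun i => π (X i)) w + 2 * (a + κ * L * Real.log (1 / a)) := by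
  set V : Ω → ℝ := fun x => truncSlope β κ f x + truncSlope β κ g x
  have hh01 (x : Ω) : |f x - g x| ∈ Icc (0 : ℝ) 1 :=
    ⟨abs_nonneg _, by
      simpa using abs_sub_le_of_le_of_le (hf.2.1 x).1 (hf.2.1 x).2 (hg.2.1 x).1 (hg.2.1 x).2⟩
  obtain ⟨w, hw01, hw⟩ := exists_comp_le_and_le_comp_add (V := V) π hh01 fun x y hxy =>
    (abs_sub_le_abs_sub_add_add _ _ (f y) (g y)).trans <| by
      gcongr
      exact add_le_add (abs_sub_le_truncSlope hf.2.1 (hπκ x y hxy))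
        (abs_sub_le_truncSlope hg.2.1 (hπκ x y hxy))
  have hwm : Measurable w := measurable_of_finite w
  have hVf : Integrable (truncSlope β κ f) μ := integrable_truncSlope hβ hf.1
  have hVg : Integrable (truncSlope β κ g) μ := integrable_truncSlope hβ hg.1
  have hV : ∫ x, V x ∂μ ≤ 2 * (a + κ * L * Real.log (1 / a)) := by
    rw [integral_add hVf hVg, two_mul]
    exact add_le_add (integral_truncSlope_le hβ hκ hL ha ha1 hf)
      (integral_truncSlope_le hβ hκ hL ha ha1 hg)
  refine ⟨w, hw01, ?_⟩
  rw [meanExcess_map hπ hwm]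
  refine (meanExcess_le_add_integral hs X
    (.of_mem_Icc 0 1 (hf.1.sub hg.1).abs.aemeasurable (.of_forall hh01))
    (.of_mem_Icc 0 1 (hwm.comp hπ).aemeasurable (.of_forall fun x => hw01 (π x)))
    (hVf.add hVg) (fun x => (hw x).1) (fun x => (hw x).2)).trans ?_
  exact add_le_add le_rfl hV

theorem measureReal_pi_exists_lt_meanExcess_abs_sub_le (μ : Measure Ω) [IsProbabilityMeasure μ]
    {r a s : ℝ} {m n : ℕ} (hβ : 0 ≤ β) (hL : 0 ≤ L) (hr : 0 < r) (ha : 0 < a) (ha1 : a ≤ 1)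
    (hs : 0 ≤ s) (hm : coveringNumber Ω r ≤ m) (η : ℝ) :
    (Measure.pi fun _ : Fin n => μ).real
        {X | ∃ f ∈ weakHolderClass μ β L, ∃ g ∈ weakHolderClass μ β L,
          η + 2 * (a + (2 * r) ^ β * L * Real.log (1 / a)) <
            meanExcess μ s X fun x => |f x - g x|} ≤
      2 ^ m * Real.exp (-(s / (1 + s) * (n * η))) := by
  obtain ⟨k, hkm, π, hπ, hπr⟩ := exists_measurable_fin_of_coveringNumber_le hm
  have hπκ (x y : Ω) (hxy : π x = π y) : dist x y ^ β ≤ (2 * r) ^ β :=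
    Real.rpow_le_rpow dist_nonneg (hπr x y hxy) hβ
  have := Measure.isProbabilityMeasure_map (μ := μ) hπ.aemeasurable
  set bad : Set (Fin n → Fin k) :=
    {T | ∃ w : Fin k → ℝ, (∀ j, w j ∈ Icc (0 : ℝ) 1) ∧ η < meanExcess (μ.map π) s T w}
  calc (Measure.pi fun _ : Fin n => μ).real _
      ≤ (Measure.pi fun _ : Fin n => μ).real {X | (fun i => π (X i)) ∈ bad} := by
        refine measureReal_mono ?_
        rintro X ⟨f, hf, g, hg, hfg⟩
        obtain ⟨w, hw01, hw⟩ := exists_meanExcess_abs_sub_le hβ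
          (Real.rpow_pos_of_pos (by positivity : 0 < 2 * r) β) hL ha ha1 hs hπ hπκ hf hg X
        exact ⟨w, hw01, by linarith⟩
    _ ≤ (Measure.pi fun _ : Fin n => μ.map π).real bad := measureReal_pi_preimage_le_pi_map hπ bad
    _ ≤ 2 ^ k * Real.exp (-(s / (1 + s) * (n * η))) := by
        simpa only [Fintype.card_fin] using measureReal_pi_exists_lt_meanExcess_le (μ.map π) hs η
    _ ≤ 2 ^ m * Real.exp (-(s / (1 + s) * (n * η))) := by gcongr; norm_num

end UniformConvergence

section Labels

variable {Ω : Type*} [MetricSpace Ω] [MeasurableSpace Ω] {D : Measure (Ω × ℝ)} {f g : Ω → ℝ}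

lemma risk_eq_zero_iff (hg : Measurable g) : risk D g = 0 ↔ ∀ᵐ p ∂D, g p.1 = p.2 := by
  rw [risk, lintegral_eq_zero_iff (by fun_prop)]
  refine Filter.eventually_congr (.of_forall fun p => ?_)
  simp [sub_eq_zero]

lemma risk_eq_ofReal_integral_abs_sub (hf : Measurable f) (hg : Measurable g)
    (hfg : Integrable (fun x => f x - g x) (D.map Prod.fst)) (hgD : ∀ᵐ p ∂D, g p.1 = p.2) :
    risk D f = ENNReal.ofReal (∫ x, |f x - g x| ∂(D.map Prod.fst)) := by
  calc risk D f = ∫⁻ p, ENNReal.ofReal |f p.1 - g p.1| ∂D :=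
        lintegral_congr_ae (hgD.mono fun p hp => by simp only [hp])
    _ = ∫⁻ x, ENNReal.ofReal |f x - g x| ∂(D.map Prod.fst) :=
        (lintegral_map (by fun_prop : Measurable fun x => ENNReal.ofReal |f x - g x|)
          measurable_fst).symm
    _ = ENNReal.ofReal (∫ x, |f x - g x| ∂(D.map Prod.fst)) :=
        (ofReal_integral_eq_lintegral_ofReal hfg.abs (.of_forall fun _ => abs_nonneg _)).symm

lemma risk_le_ofReal_of_meanExcess_le (hf : Measurable f) (hg : Measurable g)
    (hfg : Integrable (fun x => f x - g x) (D.map Prod.fst)) (hgD : ∀ᵐ p ∂D, g p.1 = p.2)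
    {s ε : ℝ} {n : ℕ} {S : Fin n → Ω × ℝ} (hgS : ∀ i, g (S i).1 = (S i).2)
    (hS : meanExcess (D.map Prod.fst) s (fun i => (S i).1) (fun x => |f x - g x|) ≤ ε) :
    risk D f ≤ ENNReal.ofReal ((1 + s) * empRisk S f + ε) := by
  rw [risk_eq_ofReal_integral_abs_sub hf hg hfg hgD]
  simp only [meanExcess, hgS] at hS
  exact ENNReal.ofReal_le_ofReal (sub_le_iff_le_add'.1 hS)

end Labels

section Constants

variable {β L ε : ℝ}

lemma two_mul_rpow_one_div_rpow_le {b : ℝ} (hb : 0 ≤ b) (hβ : 0 < β) (hβ1 : β ≤ 1) :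
    (2 * b ^ (1 / β)) ^ β ≤ 2 * b := by
  rw [Real.mul_rpow zero_le_two (by positivity), ← Real.rpow_mul hb, one_div_mul_cancel hβ.ne',
    Real.rpow_one]
  gcongr
  exact Real.rpow_le_self_of_one_le one_le_two hβ1

lemma two_le_logb_two_one_div (hε : 0 < ε) (hε4 : ε ≤ 1 / 4) : 2 ≤ Real.logb 2 (1 / ε) := by
  rw [Real.le_logb_iff_rpow_le one_lt_two (by positivity), le_div_iff₀ hε]
  norm_num
  linarith

lemma log_eight_div_le (hε : 0 < ε) (hε4 : ε ≤ 1 / 4) :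
    Real.log (1 / (ε / 8)) ≤ 5 / 2 * Real.logb 2 (1 / ε) := by
  have hl := two_le_logb_two_one_div hε hε4
  have hlog2 : Real.log 2 ≤ 1 := by linarith [Real.log_two_lt_d9]
  calc Real.log (1 / (ε / 8)) = Real.log (2 ^ 3 * (1 / ε)) := by congr 1; field_simp; norm_num
    _ = (3 + Real.logb 2 (1 / ε)) * Real.log 2 := by
        rw [Real.log_mul (by positivity) (by positivity), Real.log_pow, add_mul, Real.logb,
          div_mul_cancel₀ _ (Real.log_pos one_lt_two).ne']
        norm_num
    _ ≤ 3 + Real.logb 2 (1 / ε) := mul_le_of_le_one_right (by linarith) hlog2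
    _ ≤ 5 / 2 * Real.logb 2 (1 / ε) := by linarith

lemma two_mul_add_rpow_mul_log_le (hβ : 0 < β) (hβ1 : β ≤ 1) (hL : 0 < L) (hε : 0 < ε)
    (hε4 : ε ≤ 1 / 4) :
    2 * (ε / 8 + (2 * (ε / (256 * L * Real.logb 2 (1 / ε))) ^ (1 / β)) ^ β * L *
      Real.log (1 / (ε / 8))) ≤ ε / 2 := by
  set l := Real.logb 2 (1 / ε)
  have hl : 0 < l := zero_lt_two.trans_le (two_le_logb_two_one_div hε hε4)
  have hosc : (2 * (ε / (256 * L * l)) ^ (1 / β)) ^ β * L * Real.log (1 / (ε / 8)) ≤ ε / 8 :=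
    calc _ ≤ 2 * (ε / (256 * L * l)) * L * (5 / 2 * l) := by
          have hlog : 0 ≤ Real.log (1 / (ε / 8)) :=
            Real.log_nonneg (by rw [one_le_div₀ (by positivity)]; linarith)
          gcongr
          · exact two_mul_rpow_one_div_rpow_le (by positivity) hβ hβ1
          · exact log_eight_div_le hε hε4
      _ = 5 / 256 * ε := by field_simp
      _ ≤ ε / 8 := by linarith
  linarith

lemma two_pow_mul_exp_neg_le {m : ℕ} {δ x : ℝ} (hδ : 0 < δ) (hx : m + Real.log (1 / δ) ≤ x) :
    2 ^ m * Real.exp (-x) ≤ δ := by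
  calc 2 ^ m * Real.exp (-x) ≤ Real.exp 1 ^ m * Real.exp (-(m + Real.log (1 / δ))) := by
        gcongr
        linarith [Real.add_one_le_exp 1]
    _ = Real.exp (Real.log δ) := by
        rw [← Real.exp_nat_mul, ← Real.exp_add, one_div, Real.log_inv]
        ring_nf
    _ = δ := Real.exp_log hδ

end Constants

theorem uniform_convergence_avg_holder_general {Ω : Type*} [MetricSpace Ω] [MeasurableSpace Ω]
    [OpensMeasurableSpace Ω] {β L δ ε : ℝ} (hβ : 0 < β) (hβ1 : β ≤ 1) (hL : 0 < L) (hδ : 0 < δ)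
    (hε : 0 < ε) (hε4 : ε ≤ 1 / 4) {D : Measure (Ω × ℝ)} [IsProbabilityMeasure D] {n m : ℕ}
    (hm : coveringNumber Ω ((ε / (256 * L * Real.logb 2 (1 / ε))) ^ (1 / β)) ≤ (m : ℝ≥0∞))
    (hn : 202 * (m + Real.log (1 / δ)) / ε ≤ n) {F : Set (Ω → ℝ)}
    (hF : F ⊆ weakHolderClass (D.map Prod.fst) β L) (hD : Realizable D F) :
    ENNReal.ofReal (1 - δ) ≤ (Measure.pi fun _ : Fin n => D)
      {S | ∀ f ∈ F, risk D f ≤ ENNReal.ofReal (1.01 * empRisk S f + ε)} := by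
  obtain ⟨g, hgF, hgD⟩ := hD
  have hg := hF hgF
  rw [risk_eq_zero_iff hg.1] at hgD
  have := Measure.isProbabilityMeasure_map (μ := D) measurable_fst.aemeasurable
  have hr : 0 < (ε / (256 * L * Real.logb 2 (1 / ε))) ^ (1 / β) := by
    have := two_le_logb_two_one_div hε hε4
    positivity
  have hbad := (measureReal_pi_preimage_le_pi_map measurable_fst _).trans <|
    measureReal_pi_exists_lt_meanExcess_abs_sub_le (n := n) (D.map Prod.fst) (a := ε / 8)
      (s := 1 / 100) hβ.le hL.le hr (by positivity) (by linarith) (by norm_num) hm (ε / 2)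
  refine ofReal_one_sub_le_measure_of_ae_imp
    (hbad.trans (two_pow_mul_exp_neg_le hδ (by rw [div_le_iff₀ hε] at hn; linarith))) ?_
  have hlabels : ∀ᵐ S ∂(Measure.pi fun _ : Fin n => D), ∀ i, g (S i).1 = (S i).2 :=
    Filter.eventually_all.2 fun i =>
      (measurePreserving_eval (fun _ => D) i).quasiMeasurePreserving.ae hgD
  filter_upwards [hlabels] with S hgS hS f hfF
  have hf := hF hfF
  have hfg : Integrable (fun x => f x - g x) (D.map Prod.fst) :=
    (Integrable.of_mem_Icc 0 1 hf.1.aemeasurable (.of_forall hf.2.1)).sub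
      (.of_mem_Icc 0 1 hg.1.aemeasurable (.of_forall hg.2.1))
  rw [show (1.01 : ℝ) = 1 + 1 / 100 by norm_num]
  refine risk_le_ofReal_of_meanExcess_le hf.1 hg.1 hfg hgD hgS (not_lt.1 fun hlt => ?_)
  have herr := two_mul_add_rpow_mul_log_le hβ hβ1 hL hε hε4
  exact hS ⟨f, hf, g, hg, by linarith⟩

/-- Theorem: sample complexity of uniform convergence for
average-Hölder classes. -/
theorem uniform_convergence_avg_holder :
    ∃ c : ℝ, 0 < c ∧
      ∀ (Ω : Type u) [MetricSpace Ω] [MeasurableSpace Ω] [BorelSpace Ω]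
        (β L δ ε : ℝ),
        0 < β → β ≤ 1 → 0 < L → 0 < δ → δ < 1 → 0 < ε → ε < L → ε < 1 / 4 →
        ∀ (D : Measure (Ω × ℝ)) [IsProbabilityMeasure D],
          D {p | p.2 ∈ Icc (0:ℝ) 1} = 1 →
          ∀ μ : Measure Ω, D.map Prod.fst = μ →
          ∀ n m : ℕ,
            coveringNumber Ω ((ε / (256 * L * Real.logb 2 (1 / ε))) ^ (1 / β)) ≤ (m : ℝ≥0∞) →
            (n : ℝ) ≥ c * ((m : ℝ) + Real.log (1 / δ)) / ε →
            (Realizable D (weakHolderClass μ β L) →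
              ENNReal.ofReal (1 - δ) ≤ (Measure.pi fun _ : Fin n => D)
                {S | ∀ f ∈ weakHolderClass μ β L,
                  risk D f ≤ ENNReal.ofReal (1.01 * empRisk S f + ε)}) ∧
            (Realizable D (avgHolderClass μ β L) →
              ENNReal.ofReal (1 - δ) ≤ (Measure.pi fun _ : Fin n => D)
                {S | ∀ f ∈ avgHolderClass μ β L,
                  risk D f ≤ ENNReal.ofReal (1.01 * empRisk S f + ε)}) := by
  refine ⟨202, by norm_num, ?_⟩
  rintro Ω _ _ _ β L δ ε hβ hβ1 hL hδ - hε - hε4 D _ - μ rfl n m hm hn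
  have hconv {F : Set (Ω → ℝ)} (hF : F ⊆ weakHolderClass (D.map Prod.fst) β L) :=
    uniform_convergence_avg_holder_general hβ hβ1 hL hδ hε hε4.le hm hn hF
  exact ⟨hconv Subset.rfl, hconv (avgHolderClass_subset_weakHolderClass hβ.le)⟩

end
end
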